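/- The minimum, over all spanning trees T of G, of the diameter D(T) equals exactly 2·R_gen(G), twice the generalized radius of G; moreover D(G) ≤ min_T D(T) ≤ 2·R(G), where R(G) is the (vertex) radius of G. -/

import Mathlib

/-- The weight of a walk: the sum of the weights of its edges. -/
noncomputable def walkWeight {V : Type*} (w : V → V → ℝ) {G : SimpleGraph V} {u v : V}
    (p : G.Walk u v) : ℝ :=
  (p.darts.map fun d => w d.toProd.1 d.toProd.2).sum

/-- The weighted distance between two vertices: the least weight of a walk joining them. -/
noncomputable def wdist {V : Type*} (G : SimpleGraph V) (w : V → V → ℝ) (u v : V) : ℝ :=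
  sInf {x : ℝ | ∃ p : G.Walk u v, walkWeight w p = x}


/-- walkWeight nil -/
theorem ww_nil {V : Type*} (w : V → V → ℝ) (G : SimpleGraph V) (u : V) :
    walkWeight w (SimpleGraph.Walk.nil : G.Walk u u) = 0 := by simp [walkWeight]

theorem ww_cons {V : Type*} (w : V → V → ℝ) {G : SimpleGraph V} {u v x : V} (h : G.Adj u v)
    (p : G.Walk v x) : walkWeight w (SimpleGraph.Walk.cons h p) = w u v + walkWeight w p := by
  simp [walkWeight]

theorem ww_append {V : Type*} (w : V → V → ℝ) {G : SimpleGraph V} {u v x : V} (p : G.Walk u v)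
    (q : G.Walk v x) : walkWeight w (p.append q) = walkWeight w p + walkWeight w q := by
  simp [walkWeight]

/-- Potential lower bound for walk weights. -/
theorem ww_ge {V : Type*} (w : V → V → ℝ) {G : SimpleGraph V} (φ : V → ℝ)
    (h : ∀ x y, G.Adj x y → φ x ≤ w x y + φ y) {u v : V} (p : G.Walk u v) :
    φ u ≤ walkWeight w p + φ v := by
  induction p with
  | nil => simp [ww_nil]
  | cons hadj p ih => rw [ww_cons]; linarith [h _ _ hadj]

theorem ww_nonneg {V : Type*} (w : V → V → ℝ) {G : SimpleGraph V}
    (hw : ∀ a b : V, G.Adj a b → 0 < w a b) {u v : V} (p : G.Walk u v) : 0 ≤ walkWeight w p := by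
  have := ww_ge w (fun _ => 0) (fun x y h => by simpa using (hw x y h).le) p
  simpa using this

theorem wdist_le {V : Type*} (w : V → V → ℝ) {G : SimpleGraph V}
    (hw : ∀ a b : V, G.Adj a b → 0 < w a b) {u v : V} (p : G.Walk u v) :
    wdist G w u v ≤ walkWeight w p :=
  csInf_le ⟨0, by rintro _ ⟨q, rfl⟩; exact ww_nonneg w hw q⟩ ⟨p, rfl⟩

theorem le_wdist {V : Type*} (w : V → V → ℝ) {G : SimpleGraph V} (hG : G.Connected) {u v : V}
    {c : ℝ} (h : ∀ p : G.Walk u v, c ≤ walkWeight w p) : c ≤ wdist G w u v := by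
  obtain ⟨p⟩ := hG.preconnected u v
  exact le_csInf ⟨_, p, rfl⟩ (by rintro _ ⟨q, rfl⟩; exact h q)

theorem wdist_nonneg {V : Type*} (w : V → V → ℝ) {G : SimpleGraph V} (hG : G.Connected)
    (hw : ∀ a b : V, G.Adj a b → 0 < w a b) (u v : V) : 0 ≤ wdist G w u v :=
  le_wdist w hG fun p => ww_nonneg w hw p

theorem wdist_self {V : Type*} (w : V → V → ℝ) {G : SimpleGraph V} (hG : G.Connected)
    (hw : ∀ a b : V, G.Adj a b → 0 < w a b) (u : V) : wdist G w u u = 0 :=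
  le_antisymm ((wdist_le w hw SimpleGraph.Walk.nil).trans (ww_nil w G u).le)
    (wdist_nonneg w hG hw u u)

theorem wdist_adj {V : Type*} (w : V → V → ℝ) {G : SimpleGraph V}
    (hw : ∀ a b : V, G.Adj a b → 0 < w a b) {u v : V} (h : G.Adj u v) : wdist G w u v ≤ w u v := by
  simpa [ww_cons, ww_nil] using wdist_le w hw (SimpleGraph.Walk.cons h SimpleGraph.Walk.nil)

theorem wdist_tri {V : Type*} (w : V → V → ℝ) {G : SimpleGraph V} (hG : G.Connected)
    (hw : ∀ a b : V, G.Adj a b → 0 < w a b) (u v x : V) :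
    wdist G w u x ≤ wdist G w u v + wdist G w v x := by
  have : wdist G w u x - wdist G w v x ≤ wdist G w u v := by
    refine le_wdist w hG fun p => ?_
    have : wdist G w u x - walkWeight w p ≤ wdist G w v x := by
      refine le_wdist w hG fun q => ?_
      have := wdist_le w hw (p.append q)
      rw [ww_append] at this
      linarith
    linarith
  linarith

/-- Distance bound through a potential. -/
theorem wdist_ge {V : Type*} (w : V → V → ℝ) {G : SimpleGraph V} (hG : G.Connected) (φ : V → ℝ)
    (h : ∀ x y, G.Adj x y → φ x ≤ w x y + φ y) (u v : V) :
    φ u ≤ wdist G w u v + φ v := by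
  have : φ u - φ v ≤ wdist G w u v :=
    le_wdist w hG fun p => by linarith [ww_ge w φ h p]
  linarith

theorem wdist_comm_le {V : Type*} (w : V → V → ℝ) {G : SimpleGraph V} (hG : G.Connected)
    (hw : ∀ a b : V, G.Adj a b → 0 < w a b) (hws : ∀ a b : V, w a b = w b a) (u v : V) :
    wdist G w v u ≤ wdist G w u v := by
  have := wdist_ge w hG (fun x => wdist G w v x) (fun x y h => by
    have h1 := wdist_tri w hG hw v y x
    have h2 := wdist_adj w hw h.symm
    rw [hws y x] at h2
    linarith) u v
  simpa [wdist_self w hG hw] using this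

theorem wdist_comm {V : Type*} (w : V → V → ℝ) {G : SimpleGraph V} (hG : G.Connected)
    (hw : ∀ a b : V, G.Adj a b → 0 < w a b) (hws : ∀ a b : V, w a b = w b a) (u v : V) :
    wdist G w u v = wdist G w v u :=
  le_antisymm (wdist_comm_le w hG hw hws v u) (wdist_comm_le w hG hw hws u v)

theorem wdist_mono {V : Type*} (w : V → V → ℝ) {G T : SimpleGraph V} (hG : G.Connected)
    (hT : T.Connected) (hle : T ≤ G)
    (hw : ∀ a b : V, G.Adj a b → 0 < w a b) (u v : V) :
    wdist G w u v ≤ wdist T w u v := by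
  have := wdist_ge w hT (fun x => wdist G w x v) (fun x y h => by
    have h1 := wdist_tri w hG hw x y v
    have h2 := wdist_adj w hw (hle h)
    linarith) u v
  simpa [wdist_self w hG hw] using this

/-- First step of a shortest walk. -/
theorem exists_step {V : Type*} [Finite V] (w : V → V → ℝ) {G : SimpleGraph V} (hG : G.Connected)
    (hw : ∀ a b : V, G.Adj a b → 0 < w a b) {u v : V} (huv : u ≠ v) :
    ∃ b, G.Adj u b ∧ wdist G w u v = w u b + wdist G w b v := by
  obtain ⟨p⟩ := hG.preconnected u v
  have hne : {b | G.Adj u b}.Nonempty := by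
    cases p with
    | nil => exact absurd rfl huv
    | cons h p => exact ⟨_, h⟩
  obtain ⟨b, hb, hmin⟩ := Set.exists_min_image {b | G.Adj u b}
    (fun b => w u b + wdist G w b v) (Set.toFinite _) hne
  refine ⟨b, hb, le_antisymm ?_ ?_⟩
  · linarith [wdist_tri w hG hw u b v, wdist_adj w hw hb]
  · refine le_wdist w hG fun q => ?_
    cases q with
    | nil => exact absurd rfl huv
    | cons h q =>
      rw [ww_cons]
      have := hmin _ h
      have := wdist_le w hw q
      linarith

/-- Tree from a parent function. -/
theorem parent_tree {V : Type*} [Finite V] (G : SimpleGraph V) (r : V) (par : V → V) (g : V → ℝ)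
    (hadj : ∀ z, z ≠ r → G.Adj z (par z)) (hg : ∀ z, z ≠ r → g (par z) < g z) :
    ∃ T : SimpleGraph V, T ≤ G ∧ T.IsTree ∧ ∀ z, z ≠ r → T.Adj z (par z) := by
  classical
  let T : SimpleGraph V := SimpleGraph.fromRel (fun x y => x ≠ r ∧ y = par x)
  have hTadj : ∀ z, z ≠ r → T.Adj z (par z) := fun z hz =>
    (SimpleGraph.fromRel_adj _ _ _).2 ⟨(hadj z hz).ne, Or.inl ⟨hz, rfl⟩⟩
  have hle : T ≤ G := by
    intro x y h
    rcases (SimpleGraph.fromRel_adj _ _ _).1 h with ⟨_, ⟨h1, rfl⟩ | ⟨h1, rfl⟩⟩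
    · exact hadj _ h1
    · exact (hadj _ h1).symm
  have hreach : ∀ z, T.Reachable z r := by
    intro z
    have wf : WellFounded (fun x y : V => g x < g y) :=
      @Finite.wellFounded_of_trans_of_irrefl V _ (fun x y : V => g x < g y)
        ⟨fun _ _ _ h1 h2 => lt_trans h1 h2⟩ ⟨fun _ => lt_irrefl _⟩
    induction z using wf.induction with
    | _ z ih =>
      by_cases hz : z = r
      · subst hz; exact SimpleGraph.Reachable.refl _
      · exact (hTadj z hz).reachable.trans (ih _ (hg z hz))
  have hconn : T.Connected :=
    { preconnected := fun x y => (hreach x).trans (hreach y).symm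
      nonempty := ⟨r⟩ }
  refine ⟨T, hle, ?_, hTadj⟩
  rw [SimpleGraph.isTree_iff_connected_and_card]
  refine ⟨hconn, le_antisymm ?_ hconn.card_vert_le_card_edgeSet_add_one⟩
  have hsub : T.edgeSet ⊆ (fun z => s(z, par z)) '' {z | z ≠ r} := by
    intro e
    induction e using Sym2.ind with
    | _ x y =>
      intro h
      have h : T.Adj x y := h
      rcases (SimpleGraph.fromRel_adj _ _ _).1 h with ⟨_, ⟨h1, rfl⟩ | ⟨h1, rfl⟩⟩
      · exact ⟨x, h1, rfl⟩
      · exact ⟨y, h1, Sym2.eq_swap⟩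
  have h1 : Nat.card T.edgeSet ≤ ({z | z ≠ r} : Set V).ncard :=
    (Set.ncard_le_ncard hsub (Set.toFinite _)).trans (Set.ncard_image_le (Set.toFinite _))
  have h2 : ({z | z ≠ r} : Set V).ncard + 1 = Nat.card V := by
    have := Set.ncard_add_ncard_compl ({r} : Set V)
    rw [Set.ncard_singleton] at this
    have h3 : ({r} : Set V)ᶜ = {z | z ≠ r} := rfl
    rw [h3] at this
    omega
  omega

/-- Vertex-rooted shortest path tree. -/
theorem vertex_tree {V : Type*} [Finite V] (w : V → V → ℝ) {G : SimpleGraph V} (hG : G.Connected)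
    (hw : ∀ a b : V, G.Adj a b → 0 < w a b) (hws : ∀ a b : V, w a b = w b a) (r : V) (c : ℝ)
    (hc : ∀ z, wdist G w r z ≤ c) :
    ∃ T : SimpleGraph V, T ≤ G ∧ T.IsTree ∧ ∀ u v, wdist T w u v ≤ 2 * c := by
  have hstep : ∀ z, ∃ b, z ≠ r → G.Adj z b ∧ wdist G w z r = w z b + wdist G w b r := by
    intro z
    by_cases hz : z = r
    · exact ⟨r, fun h => absurd hz h⟩
    · obtain ⟨b, hb⟩ := exists_step w hG hw hz
      exact ⟨b, fun _ => hb⟩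
  choose par hpar using hstep
  have hlt : ∀ z, z ≠ r → wdist G w (par z) r < wdist G w z r := fun z hz => by
    have := hpar z hz
    linarith [hw _ _ this.1]
  obtain ⟨T, hle, hT, hTadj⟩ := parent_tree G r par (fun z => wdist G w z r)
    (fun z hz => (hpar z hz).1) hlt
  have hTw : ∀ a b : V, T.Adj a b → 0 < w a b := fun a b h => hw a b (hle h)
  have hTc := hT.connected
  have key : ∀ z, wdist T w z r ≤ wdist G w z r := by
    intro z
    have wf : WellFounded (fun x y : V => wdist G w x r < wdist G w y r) :=
      @Finite.wellFounded_of_trans_of_irrefl V _ (fun x y : V => wdist G w x r < wdist G w y r)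
        ⟨fun _ _ _ h1 h2 => lt_trans h1 h2⟩ ⟨fun _ => lt_irrefl _⟩
    induction z using wf.induction with
    | _ z ih =>
      by_cases hz : z = r
      · subst hz; rw [wdist_self w hTc hTw, wdist_self w hG hw]
      · have h1 := ih _ (hlt z hz)
        have h2 := wdist_tri w hTc hTw z (par z) r
        have h3 := wdist_adj w hTw (hTadj z hz)
        linarith [(hpar z hz).2]
  refine ⟨T, hle, hT, fun u v => ?_⟩
  have h1 := wdist_tri w hTc hTw u r v
  have h2 := wdist_comm w hTc hTw hws r v
  have h3 := wdist_comm w hG hw hws r u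
  have h4 := wdist_comm w hG hw hws r v
  linarith [key u, key v, hc u, hc v]

/-- Shortest path tree rooted at a point of an edge. -/
theorem edge_tree {V : Type*} [Finite V] (w : V → V → ℝ) {G : SimpleGraph V} (hG : G.Connected)
    (hw : ∀ a b : V, G.Adj a b → 0 < w a b) (hws : ∀ a b : V, w a b = w b a) {a b : V}
    (hab : G.Adj a b) (α : ℝ) (h0 : 0 ≤ α) (hα : α ≤ w a b) (c : ℝ)
    (hc : ∀ z, min (α + wdist G w a z) (w a b - α + wdist G w b z) ≤ c) :
    ∃ T : SimpleGraph V, T ≤ G ∧ T.IsTree ∧ ∀ u v, wdist T w u v ≤ 2 * c := by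
  classical
  have hcab := wdist_comm w hG hw hws a b
  by_cases hA : w a b - α + wdist G w b a < α
  · refine vertex_tree w hG hw hws b c fun z => ?_
    have h1 := wdist_tri w hG hw b a z
    rcases min_le_iff.1 (hc z) with h | h <;> linarith
  by_cases hB : α + wdist G w a b < w a b - α
  · refine vertex_tree w hG hw hws a c fun z => ?_
    have h1 := wdist_tri w hG hw a b z
    rcases min_le_iff.1 (hc z) with h | h <;> linarith
  push Not at hA hB
  set f : V → ℝ := fun z => min (α + wdist G w z a) (w a b - α + wdist G w z b) with hf
  have hfc : ∀ z, f z ≤ c := fun z => by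
    have := hc z
    rwa [wdist_comm w hG hw hws a z, wdist_comm w hG hw hws b z] at this
  have hf0 : ∀ z, 0 ≤ f z := fun z => le_min (by linarith [wdist_nonneg w hG hw z a])
    (by linarith [wdist_nonneg w hG hw z b])
  have hfa : f a = α := by
    simp only [hf, wdist_self w hG hw]
    rw [min_eq_left] <;> linarith
  have hfb : f b = w a b - α := by
    simp only [hf, wdist_self w hG hw]
    rw [min_eq_right] <;> linarith
  have hstep : ∀ z, ∃ y, z ≠ a → z ≠ b → G.Adj z y ∧ w z y + f y ≤ f z := by
    intro z
    by_cases hz : z = a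
    · exact ⟨a, fun h => absurd hz h⟩
    by_cases hz' : z = b
    · exact ⟨a, fun _ h => absurd hz' h⟩
    rcases min_choice (α + wdist G w z a) (w a b - α + wdist G w z b) with h | h
    · obtain ⟨y, hy, hy'⟩ := exists_step w hG hw hz
      refine ⟨y, fun _ _ => ⟨hy, ?_⟩⟩
      have h1 : f y ≤ α + wdist G w y a := min_le_left _ _
      have h2 : f z = α + wdist G w z a := h
      linarith
    · obtain ⟨y, hy, hy'⟩ := exists_step w hG hw hz'
      refine ⟨y, fun _ _ => ⟨hy, ?_⟩⟩
      have h1 : f y ≤ w a b - α + wdist G w y b := min_le_right _ _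
      have h2 : f z = w a b - α + wdist G w z b := h
      linarith
  choose par hpar using hstep
  have hlt : ∀ z, z ≠ a → z ≠ b → f (par z) < f z := fun z hz hz' => by
    have := hpar z hz hz'
    linarith [hw _ _ this.1]
  obtain ⟨T, hle, hT, hTadj⟩ := parent_tree G a (fun z => if z = b then a else par z)
    (fun z => if z = a then -1 else f z)
    (fun z hz => by
      by_cases hz' : z = b
      · subst hz'; simpa using hab.symm
      · simpa [hz'] using (hpar z hz hz').1)
    (fun z hz => by
      by_cases hz' : z = b
      · subst hz'; simp only [if_true, if_neg hz]; linarith [hf0 z]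
      · simp only [if_neg hz, if_neg hz']
        split_ifs
        · linarith [hf0 z]
        · exact hlt z hz hz')
  have hTw : ∀ a b : V, T.Adj a b → 0 < w a b := fun a b h => hw a b (hle h)
  have hTc := hT.connected
  have hTab : T.Adj b a := by simpa using hTadj b hab.ne'
  have key : ∀ z, wdist T w z a ≤ f z - α ∨ wdist T w z b ≤ f z - (w a b - α) := by
    intro z
    have wf : WellFounded (fun x y : V => f x < f y) :=
      @Finite.wellFounded_of_trans_of_irrefl V _ (fun x y : V => f x < f y)
        ⟨fun _ _ _ h1 h2 => lt_trans h1 h2⟩ ⟨fun _ => lt_irrefl _⟩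
    induction z using wf.induction with
    | _ z ih =>
      by_cases hz : z = a
      · left; rw [hz, wdist_self w hTc hTw, hfa]; linarith
      by_cases hz' : z = b
      · right; rw [hz', wdist_self w hTc hTw, hfb]; linarith
      have hadj := hTadj z hz
      simp only [if_neg hz'] at hadj
      have h3 := wdist_adj w hTw hadj
      have h4 := (hpar z hz hz').2
      rcases ih _ (hlt z hz hz') with h | h
      · left; linarith [wdist_tri w hTc hTw z (par z) a]
      · right; linarith [wdist_tri w hTc hTw z (par z) b]
  refine ⟨T, hle, hT, fun u v => ?_⟩
  have e1 := wdist_adj w hTw hTab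
  have e2 := wdist_adj w hTw hTab.symm
  rw [hws b a] at e1
  have c1 := wdist_comm w hTc hTw hws a v
  have c2 := wdist_comm w hTc hTw hws b v
  have t1 := wdist_tri w hTc hTw u a v
  have t2 := wdist_tri w hTc hTw u b v
  have t3 := wdist_tri w hTc hTw a b v
  have t4 := wdist_tri w hTc hTw b a v
  have fu := hfc u
  have fv := hfc v
  rcases key u with h | h <;> rcases key v with h' | h' <;> linarith

/-- The cut of a tree at an edge. -/
theorem tree_cut {V : Type*} {T : SimpleGraph V} (hT : T.IsAcyclic) {a b : V} (hab : T.Adj a b) :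
    ∃ S : Set V, a ∈ S ∧ b ∉ S ∧ ∀ x y, T.Adj x y → x ∈ S → y ∉ S → x = a ∧ y = b := by
  have hbr := SimpleGraph.isAcyclic_iff_forall_adj_isBridge.1 hT hab
  rw [SimpleGraph.isBridge_iff] at hbr
  refine ⟨{z | (T \ SimpleGraph.fromEdgeSet {s(a, b)}).Reachable a z},
    SimpleGraph.Reachable.refl _, hbr, fun x y hxy hx hy => ?_⟩
  by_contra hne
  by_cases he : s(x, y) = s(a, b)
  · rcases Sym2.eq_iff.1 he with h | ⟨rfl, rfl⟩
    · exact hne h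
    · exact hbr hx
  · apply hy
    refine SimpleGraph.Reachable.trans hx (SimpleGraph.Adj.reachable ?_)
    simp [SimpleGraph.sdiff_adj, hxy, he]

/-- Walks crossing a cut. -/
theorem cut_dist {V : Type*} (w : V → V → ℝ) {T : SimpleGraph V} (hT : T.Connected)
    (hw : ∀ a b : V, T.Adj a b → 0 < w a b) {a b : V} (S : Set V)
    (hS : ∀ x y, T.Adj x y → x ∈ S → y ∉ S → x = a ∧ y = b) {u v : V} (hu : u ∈ S) (hv : v ∉ S) :
    wdist T w u a + w a b + wdist T w b v ≤ wdist T w u v := by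
  refine le_wdist w hT fun p => ?_
  induction p with
  | nil => exact absurd hu hv
  | @cons x y z h p ih =>
    rw [ww_cons]
    by_cases hy : y ∈ S
    · have := ih hy hv
      linarith [wdist_tri w hT hw x y a, wdist_adj w hw h]
    · obtain ⟨rfl, rfl⟩ := hS x y h hu hy
      rw [wdist_self w hT hw]
      linarith [wdist_le w hw p]

/-- Midpoint of a diameter. -/
theorem tree_center {V : Type*} [Finite V] (w : V → V → ℝ) {T : SimpleGraph V} (hT : T.IsTree)
    (hw : ∀ a b : V, T.Adj a b → 0 < w a b) (hws : ∀ a b : V, w a b = w b a) {u v : V} (D : ℝ)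
    (hD0 : 0 < D) (huv : wdist T w u v = D) (hD : ∀ x y, wdist T w x y ≤ D) :
    ∃ a b, T.Adj a b ∧ ∃ α ∈ Set.Icc 0 (w a b), ∀ z,
      min (α + wdist T w a z) (w a b - α + wdist T w b z) ≤ D / 2 := by
  have hc := hT.connected
  obtain ⟨a, ⟨ha1, ha2⟩, hmax⟩ := Set.exists_max_image
    {a | wdist T w u a + wdist T w a v = D ∧ wdist T w u a ≤ D / 2} (fun a => wdist T w u a)
    (Set.toFinite _) ⟨u, by simp [wdist_self w hc hw, huv], by
      rw [wdist_self w hc hw]; linarith⟩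
  have hav : a ≠ v := by rintro rfl; linarith
  obtain ⟨b, hab, hb⟩ := exists_step w hc hw hav
  have hpos := hw _ _ hab
  have hub : wdist T w u b = wdist T w u a + w a b := by
    have := wdist_tri w hc hw u b v
    have := wdist_tri w hc hw u a b
    have := wdist_adj w hw hab
    apply le_antisymm <;> linarith
  have hub2 : D / 2 < wdist T w u b := by
    by_contra hcon
    have := hmax b ⟨by linarith, by linarith⟩
    linarith
  obtain ⟨S, haS, hbS, hS⟩ := tree_cut hT.isAcyclic hab
  have huS : u ∈ S := by
    by_contra hn
    have := cut_dist w hc hw S hS haS hn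
    rw [wdist_self w hc hw] at this
    linarith [wdist_comm w hc hw hws a u, wdist_comm w hc hw hws b u]
  have hvS : v ∉ S := by
    intro hn
    have := cut_dist w hc hw S hS hn hbS
    rw [wdist_self w hc hw] at this
    linarith [wdist_comm w hc hw hws a v, wdist_comm w hc hw hws b v]
  refine ⟨a, b, hab, D / 2 - wdist T w u a, ⟨by linarith, by linarith⟩, fun z => ?_⟩
  by_cases hz : z ∈ S
  · have := cut_dist w hc hw S hS hz hvS
    refine (min_le_left _ _).trans ?_
    linarith [hD z v, wdist_comm w hc hw hws a z]
  · have := cut_dist w hc hw S hS huS hz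
    refine (min_le_right _ _).trans ?_
    linarith [hD u z]

/-- The minimum, over all spanning trees `T` of `G`, of the diameter `D(T)`
equals exactly `2 · R_gen(G)`, twice the generalized radius of `G`; moreover
`D(G) ≤ min_T D(T) ≤ 2 · R(G)`, where `R(G)` is the (vertex) radius of `G`. -/
theorem stmt17 {V : Type*} [Fintype V] (G : SimpleGraph V) (hG : G.Connected)
    (w : V → V → ℝ) (hw : ∀ a b : V, G.Adj a b → 0 < w a b)
    (hws : ∀ a b : V, w a b = w b a)
    (hE : ∃ a b : V, G.Adj a b) :
    sInf {x : ℝ | ∃ T : SimpleGraph V, T ≤ G ∧ T.IsTree ∧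
        x = ⨆ u : V, ⨆ v : V, wdist T w u v} =
      2 * sInf {x : ℝ | ∃ a b : V, G.Adj a b ∧ ∃ α ∈ Set.Icc 0 (w a b),
        x = ⨆ z : V, min (α + wdist G w a z) (w a b - α + wdist G w b z)} ∧
    (⨆ u : V, ⨆ v : V, wdist G w u v) ≤
      sInf {x : ℝ | ∃ T : SimpleGraph V, T ≤ G ∧ T.IsTree ∧
        x = ⨆ u : V, ⨆ v : V, wdist T w u v} ∧
    sInf {x : ℝ | ∃ T : SimpleGraph V, T ≤ G ∧ T.IsTree ∧
        x = ⨆ u : V, ⨆ v : V, wdist T w u v} ≤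
      2 * ⨅ v : V, ⨆ z : V, wdist G w v z := by
  have hne : Nonempty V := hG.nonempty
  have hTw : ∀ T : SimpleGraph V, T ≤ G → ∀ a b : V, T.Adj a b → 0 < w a b :=
    fun T hle a b h => hw a b (hle h)
  have bdd : ∀ f : V → ℝ, BddAbove (Set.range f) := fun f => (Set.finite_range f).bddAbove
  have le_diam : ∀ (H : SimpleGraph V) (u v : V),
      wdist H w u v ≤ ⨆ u : V, ⨆ v : V, wdist H w u v := fun H u v =>
    (le_ciSup (bdd (fun v => wdist H w u v)) v).trans
      (le_ciSup (bdd (fun u => ⨆ v : V, wdist H w u v)) u)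
  have diam_le : ∀ (H : SimpleGraph V) (c : ℝ), (∀ u v, wdist H w u v ≤ c) →
      (⨆ u : V, ⨆ v : V, wdist H w u v) ≤ c := fun H c h =>
    ciSup_le fun u => ciSup_le fun v => h u v
  set A : Set ℝ := {x : ℝ | ∃ T : SimpleGraph V, T ≤ G ∧ T.IsTree ∧
        x = ⨆ u : V, ⨆ v : V, wdist T w u v} with hA
  set B : Set ℝ := {x : ℝ | ∃ a b : V, G.Adj a b ∧ ∃ α ∈ Set.Icc 0 (w a b),
        x = ⨆ z : V, min (α + wdist G w a z) (w a b - α + wdist G w b z)} with hB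
  have hAne : A.Nonempty := by
    obtain ⟨T, hle, hT⟩ := hG.exists_isTree_le
    exact ⟨_, T, hle, hT, rfl⟩
  have hAbdd : BddBelow A := by
    refine ⟨0, ?_⟩
    rintro _ ⟨T, hle, hT, rfl⟩
    obtain ⟨u⟩ := hne
    exact (wdist_nonneg w hT.connected (hTw T hle) u u).trans (le_diam T u u)
  have hBbdd : BddBelow B := by
    refine ⟨0, ?_⟩
    rintro _ ⟨a, b, hab, α, ⟨h0, h1⟩, rfl⟩
    refine le_trans ?_ (le_ciSup (bdd _) a)
    exact le_min (by linarith [wdist_nonneg w hG hw a a]) (by linarith [wdist_nonneg w hG hw b a])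
  have hBne : B.Nonempty := by
    obtain ⟨a, b, hab⟩ := hE
    exact ⟨_, a, b, hab, 0, ⟨le_rfl, (hw a b hab).le⟩, rfl⟩
  have useT : ∀ c : ℝ, (∃ T : SimpleGraph V, T ≤ G ∧ T.IsTree ∧ ∀ u v, wdist T w u v ≤ 2 * c) →
      sInf A ≤ 2 * c := by
    rintro c ⟨T, hle, hT, h⟩
    exact (csInf_le hAbdd ⟨T, hle, hT, rfl⟩).trans (diam_le T _ h)
  refine ⟨le_antisymm ?_ ?_, ?_, ?_⟩
  · have : sInf A / 2 ≤ sInf B := by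
      refine le_csInf hBne ?_
      rintro _ ⟨a, b, hab, α, ⟨h0, h1⟩, rfl⟩
      have := useT _ (edge_tree w hG hw hws hab α h0 h1 _ fun z =>
        le_ciSup (bdd (fun z => min (α + wdist G w a z) (w a b - α + wdist G w b z))) z)
      linarith
    linarith
  · refine le_csInf hAne ?_
    rintro _ ⟨T, hle, hT, rfl⟩
    have hTc := hT.connected
    have hw' := hTw T hle
    obtain ⟨u, hu⟩ := exists_eq_ciSup_of_finite (f := fun u : V => ⨆ v : V, wdist T w u v)
    obtain ⟨v, hv⟩ := exists_eq_ciSup_of_finite (f := fun v : V => wdist T w u v)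
    have hD0 : 0 < ⨆ u : V, ⨆ v : V, wdist T w u v := by
      obtain ⟨a, b, hab⟩ := hE
      obtain ⟨c, hc, hc'⟩ := exists_step w hTc hw' hab.ne
      linarith [hw' _ _ hc, wdist_nonneg w hTc hw' c b, le_diam T a b]
    obtain ⟨a, b, hab, α, hα, hz⟩ := tree_center w hT hw' hws (u := u) (v := v) _ hD0
      (hv.trans hu) (le_diam T)
    have h1 : sInf B ≤ ⨆ z : V, min (α + wdist G w a z) (w a b - α + wdist G w b z) :=
      csInf_le hBbdd ⟨a, b, hle hab, α, hα, rfl⟩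
    have h2 : (⨆ z : V, min (α + wdist G w a z) (w a b - α + wdist G w b z)) ≤
        (⨆ u : V, ⨆ v : V, wdist T w u v) / 2 := by
      refine ciSup_le fun z => le_trans ?_ (hz z)
      exact min_le_min (by linarith [wdist_mono w hG hTc hle hw a z])
        (by linarith [wdist_mono w hG hTc hle hw b z])
    linarith
  · refine le_csInf hAne ?_
    rintro _ ⟨T, hle, hT, rfl⟩
    exact diam_le G _ fun u v =>
      (wdist_mono w hG hT.connected hle hw u v).trans (le_diam T u v)
  · obtain ⟨r, hr⟩ := exists_eq_ciInf_of_finite (f := fun v : V => ⨆ z : V, wdist G w v z)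
    rw [← hr]
    exact useT _ (vertex_tree w hG hw hws r _ fun z => le_ciSup (bdd (fun z => wdist G w r z)) z)
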